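/- Let n ≥ 1 and let X be a real n×n matrix such that the maximizer of ⟨D, X⟩ over the n×n doubly stochastic matrices is unique and is a permutation matrix P. For each θ > 0 let D^θ_X be the unique maximizer of Γ^θ_X(D) = ⟨D, X⟩ − (1/θ)⟨D, D⟩ over the n×n doubly stochastic matrices. Then D^θ_X converges to P as θ → ∞. -/

import Mathlib

open Finset

def IsDoublyStochastic {n : ℕ} (D : Matrix (Fin n) (Fin n) ℝ) : Prop :=
  (∀ i j, 0 ≤ D i j) ∧ (∀ i, ∑ j, D i j = 1) ∧ (∀ j, ∑ i, D i j = 1)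

noncomputable def finner {n : ℕ} (A B : Matrix (Fin n) (Fin n) ℝ) : ℝ :=
  ∑ i, ∑ j, A i j * B i j

noncomputable def fnorm {n : ℕ} (A : Matrix (Fin n) (Fin n) ℝ) : ℝ :=
  Real.sqrt (finner A A)

noncomputable def Gamma {n : ℕ} (θ : ℝ) (X D : Matrix (Fin n) (Fin n) ℝ) : ℝ :=
  finner D X - (1 / θ) * finner D D
def IsPermutationMatrix {n : ℕ} (P : Matrix (Fin n) (Fin n) ℝ) : Prop :=
  IsDoublyStochastic P ∧ ∀ i j, P i j = 0 ∨ P i j = 1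

/-!
Comparing `Γ^θ_X` at `D^θ_X` and at `P` gives `⟨P, X⟩ - ⟨P, P⟩ / θ ≤ ⟨D^θ_X, X⟩ ≤ ⟨P, X⟩`, so the
linear objective along `D^θ_X` tends to its maximum. By Birkhoff's theorem the doubly stochastic
matrices are the convex hull of finitely many matrices, hence compact, and every cluster point of
`D^θ_X` there maximizes `⟨·, X⟩`, so it equals `P`.
-/

open Filter Topology

section UniqueMaximizer

variable {ι α β : Type*} {l : Filter ι} {K : Set α} {u : ι → α} {x₀ : α} {f g : α → ℝ} {ε : ι → ℝ}

theorem tendsto_comp_of_isMaxOn_sub_mul (hx₀ : x₀ ∈ K) (hmax : IsMaxOn f K x₀)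
    (hg : BddBelow (g '' K)) (hε : Tendsto ε l (𝓝 0)) (hε₀ : ∀ᶠ i in l, 0 ≤ ε i)
    (hu : ∀ᶠ i in l, u i ∈ K)
    (humax : ∀ᶠ i in l, IsMaxOn (fun x ↦ f x - ε i * g x) K (u i)) :
    Tendsto (f ∘ u) l (𝓝 (f x₀)) := by
  obtain ⟨m, hm⟩ := hg
  have hlower : Tendsto (fun i ↦ f x₀ - ε i * (g x₀ - m)) l (𝓝 (f x₀)) := by
    simpa using tendsto_const_nhds.sub (hε.mul_const (g x₀ - m))
  refine tendsto_of_tendsto_of_tendsto_of_le_of_le' hlower tendsto_const_nhds ?_ ?_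
  · filter_upwards [hε₀, hu, humax] with i hεi hui hmaxi
    have hcompare : f x₀ - ε i * g x₀ ≤ f (u i) - ε i * g (u i) := hmaxi hx₀
    have hreg : ε i * m ≤ ε i * g (u i) :=
      mul_le_mul_of_nonneg_left (hm (Set.mem_image_of_mem g hui)) hεi
    simp only [Function.comp_apply]
    linarith
  · filter_upwards [hu] with i hui using hmax hui

variable [TopologicalSpace α]

theorem le_of_mapClusterPt_of_tendsto_comp [LinearOrder β] [TopologicalSpace β]
    [ClosedIicTopology β] [DenselyOrdered β] {f : α → β} {x : α} {b : β}
    (hf : UpperSemicontinuousWithinAt f K x) (hu : ∀ᶠ i in l, u i ∈ K)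
    (hfu : Tendsto (f ∘ u) l (𝓝 b)) (hx : MapClusterPt x l u) : b ≤ f x := by
  refine le_of_forall_lt_imp_le_of_dense fun c hc ↦ ?_
  have hsuperlevel : ∀ᶠ i in l, c ≤ f (u i) ∧ u i ∈ K :=
    ((hfu.eventually_const_lt hc).mono fun _ ↦ le_of_lt).and hu
  have hfreq : ∃ᶠ y in 𝓝[K] x, c ≤ f y :=
    frequently_nhdsWithin_iff.2 (hx.clusterPt.frequently' (eventually_map.2 hsuperlevel))
  exact hf.frequently c hfreq

theorem tendsto_of_tendsto_comp_of_unique_isMaxOn [LinearOrder β] [TopologicalSpace β]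
    [ClosedIicTopology β] [DenselyOrdered β] {f : α → β} (hK : IsCompact K)
    (hf : UpperSemicontinuousOn f K) (hmax : IsMaxOn f K x₀)
    (hunique : ∀ x ∈ K, IsMaxOn f K x → x = x₀) (hu : ∀ᶠ i in l, u i ∈ K)
    (hfu : Tendsto (f ∘ u) l (𝓝 (f x₀))) : Tendsto u l (𝓝 x₀) := by
  refine hK.tendsto_nhds_of_unique_mapClusterPt hu fun x hx hcluster ↦ hunique x hx fun y hy ↦ ?_
  exact (hmax hy).trans (le_of_mapClusterPt_of_tendsto_comp (hf x hx) hu hfu hcluster)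

theorem tendsto_of_isMaxOn_sub_mul_of_unique_isMaxOn (hK : IsCompact K)
    (hf : UpperSemicontinuousOn f K) (hx₀ : x₀ ∈ K) (hmax : IsMaxOn f K x₀)
    (hunique : ∀ x ∈ K, IsMaxOn f K x → x = x₀)
    (hg : BddBelow (g '' K)) (hε : Tendsto ε l (𝓝 0)) (hε₀ : ∀ᶠ i in l, 0 ≤ ε i)
    (hu : ∀ᶠ i in l, u i ∈ K)
    (humax : ∀ᶠ i in l, IsMaxOn (fun x ↦ f x - ε i * g x) K (u i)) :
    Tendsto u l (𝓝 x₀) :=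
  tendsto_of_tendsto_comp_of_unique_isMaxOn hK hf hmax hunique hu
    (tendsto_comp_of_isMaxOn_sub_mul hx₀ hmax hg hε hε₀ hu humax)

end UniqueMaximizer

theorem isCompact_doublyStochastic (m : Type*) [Fintype m] [DecidableEq m] :
    IsCompact (doublyStochastic ℝ m : Set (Matrix m m ℝ)) := by
  rw [doublyStochastic_eq_convexHull_permMatrix]
  exact (Set.finite_range fun σ : Equiv.Perm m ↦ σ.permMatrix ℝ).isCompact_convexHull ℝ

section DoublyStochastic

variable {n : ℕ}

theorem isCompact_setOf_isDoublyStochastic :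
    IsCompact {D : Matrix (Fin n) (Fin n) ℝ | IsDoublyStochastic D} := by
  convert isCompact_doublyStochastic (Fin n) using 1
  ext D
  exact mem_doublyStochastic_iff_sum.symm

theorem continuous_finner_left (X : Matrix (Fin n) (Fin n) ℝ) :
    Continuous fun D ↦ finner D X := by
  unfold finner
  fun_prop

theorem finner_self_nonneg (A : Matrix (Fin n) (Fin n) ℝ) : 0 ≤ finner A A :=
  sum_nonneg fun i _ ↦ sum_nonneg fun j _ ↦ mul_self_nonneg (A i j)

end DoublyStochastic

/-- if the maximizer of ⟨D, X⟩ over the doubly stochastic matrices is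
unique and is a permutation matrix P, then D^θ_X → P as θ → ∞. -/
theorem stmt_4 (n : ℕ) (hn : 1 ≤ n) (X : Matrix (Fin n) (Fin n) ℝ)
    (P : Matrix (Fin n) (Fin n) ℝ)
    (hP : IsPermutationMatrix P)
    (hPMax : ∀ E : Matrix (Fin n) (Fin n) ℝ, IsDoublyStochastic E → finner E X ≤ finner P X)
    (hPUnique : ∀ D : Matrix (Fin n) (Fin n) ℝ, IsDoublyStochastic D →
      (∀ E : Matrix (Fin n) (Fin n) ℝ, IsDoublyStochastic E → finner E X ≤ finner D X) →
      D = P)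
    (Dθ : ℝ → Matrix (Fin n) (Fin n) ℝ)
    (hDθ : ∀ θ : ℝ, 0 < θ → IsDoublyStochastic (Dθ θ) ∧
      ∀ E : Matrix (Fin n) (Fin n) ℝ, IsDoublyStochastic E → E ≠ Dθ θ →
        Gamma θ X E < Gamma θ X (Dθ θ)) :
    Filter.Tendsto Dθ Filter.atTop (nhds P) := by
  have hpos : ∀ᶠ θ : ℝ in atTop, 0 < θ := eventually_gt_atTop 0
  have hbdd : BddBelow
      ((fun D : Matrix (Fin n) (Fin n) ℝ ↦ finner D D) '' {D | IsDoublyStochastic D}) :=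
    ⟨0, Set.forall_mem_image.2 fun D _ ↦ finner_self_nonneg D⟩
  have hweight : Tendsto (fun θ : ℝ ↦ 1 / θ) atTop (𝓝 0) := tendsto_const_nhds.div_atTop tendsto_id
  have hGammaMax : ∀ θ : ℝ, 0 < θ → IsMaxOn (Gamma θ X) {D | IsDoublyStochastic D} (Dθ θ) := by
    intro θ hθ E hE
    change Gamma θ X E ≤ Gamma θ X (Dθ θ)
    rcases eq_or_ne E (Dθ θ) with rfl | hne
    · exact le_rfl
    · exact ((hDθ θ hθ).2 E hE hne).le
  exact tendsto_of_isMaxOn_sub_mul_of_unique_isMaxOn isCompact_setOf_isDoublyStochastic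
    ((continuous_finner_left X).upperSemicontinuous.upperSemicontinuousOn _) hP.1 hPMax hPUnique
    hbdd hweight (hpos.mono fun θ hθ ↦ by positivity) (hpos.mono fun θ hθ ↦ (hDθ θ hθ).1)
    (hpos.mono hGammaMax)
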